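/- Let M = U³ ⊕ ℤζ ⊕ ℤε with (ζ,ζ) = (ε,ε) = −2, (ζ,ε) = 0 and ζ, ε orthogonal to U³. Since (x, ζ+ε) ∈ 2ℤ for every x ∈ M, the reflection R(x) := x + ½ (x, ζ+ε)(ζ+ε) in the (−4)-vector ζ+ε is a well-defined integral isometry of M belonging to O^+(M). Then O^+(M) is generated by R together with the subgroup {g ∈ O^+(M) : g(ε) = ε}; equivalently, O^+(U³ ⊕ ℤζ ⊕ ℤε) is generated by R and the extensions by the identity on ℤε of the elements of O^+(U³ ⊕ ℤζ). -/

import Mathlib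

open Matrix

/-- The ℝ-bilinear extension of the integral bilinear form with Gram matrix `M`. -/
def bilinR {ι : Type*} [Fintype ι] (M : Matrix ι ι ℤ) (x y : ι → ℝ) : ℝ :=
  x ⬝ᵥ ((M.map (Int.cast : ℤ → ℝ)) *ᵥ y)

/-- `w` is a tuple of vectors of `L ⊗ ℝ` spanning a maximal positive definite subspace:
its Gram matrix is positive definite and no longer tuple has positive definite Gram matrix. -/
def IsMaxPosTuple {ι : Type*} [Fintype ι] (M : Matrix ι ι ℤ) {k : ℕ}
    (w : Fin k → ι → ℝ) : Prop :=
  (Matrix.of fun i j => bilinR M (w i) (w j)).PosDef ∧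
    ∀ w' : Fin (k + 1) → ι → ℝ,
      ¬ (Matrix.of fun i j => bilinR M (w' i) (w' j)).PosDef

/-- `g` preserves the orientation of the positive cone of the lattice with Gram matrix `M`:
for every basis `w` of a maximal positive definite subspace `W` of `L ⊗ ℝ`, the determinant of
the matrix `(B(wᵢ, g wⱼ))` (which equals, up to the positive factor `det (Gram w)`, the
determinant of the orthogonal projection of `g|_W` back to `W`) is positive. -/
def OrientPres {ι : Type*} [Fintype ι] (M : Matrix ι ι ℤ) (g : Matrix ι ι ℤ) : Prop :=
  ∀ (k : ℕ) (w : Fin k → ι → ℝ), IsMaxPosTuple M w →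
    0 < (Matrix.of fun i j : Fin k =>
          bilinR M (w i) ((g.map (Int.cast : ℤ → ℝ)) *ᵥ w j)).det

/-- `g` is an isometry of the lattice with Gram matrix `M`. -/
def IsIsometry {ι : Type*} [Fintype ι] (M : Matrix ι ι ℤ) (g : Matrix ι ι ℤ) : Prop :=
  gᵀ * M * g = M

/-- A vector of a lattice is primitive if it is divisible only by units. -/
def IsPrimitiveVec {ι : Type*} (l : ι → ℤ) : Prop :=
  ∀ (c : ℤ) (x : ι → ℤ), l = c • x → IsUnit c

/-- The Gram matrix of the lattice `L = U³ ⊕ ⟨-2⟩ ⊕ ⟨-2⟩`, in the basis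
`e₁, f₁, e₂, f₂, e₃, f₃, t, s`. -/
def G8 : Matrix (Fin 8) (Fin 8) ℤ :=
  !![0,1,0,0,0,0,0,0;
     1,0,0,0,0,0,0,0;
     0,0,0,1,0,0,0,0;
     0,0,1,0,0,0,0,0;
     0,0,0,0,0,1,0,0;
     0,0,0,0,1,0,0,0;
     0,0,0,0,0,0,-2,0;
     0,0,0,0,0,0,0,-2]

/-- The class `ζ + ε`, of square `-4`. -/
def zpe : Fin 8 → ℤ := ![0,0,0,0,0,0,1,1]

/-- The generator `ε` of the last `⟨-2⟩` summand. -/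
def epsv : Fin 8 → ℤ := ![0,0,0,0,0,0,0,1]

/-- The reflection `R(x) = x + ½ (x, ζ+ε)(ζ+ε)` in the `(-4)`-vector `ζ + ε`,
as an integral matrix: it is the identity on `U³`, sends `ζ ↦ -ε` and `ε ↦ -ζ`. -/
def RM : Matrix (Fin 8) (Fin 8) ℤ :=
  !![1,0,0,0,0,0,0,0;
     0,1,0,0,0,0,0,0;
     0,0,1,0,0,0,0,0;
     0,0,0,1,0,0,0,0;
     0,0,0,0,1,0,0,0;
     0,0,0,0,0,1,0,0;
     0,0,0,0,0,0,0,-1;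
     0,0,0,0,0,0,-1,0]

theorem key_det {n m : ℕ} (A A' : Matrix (Fin n) (Fin n) ℝ) (C C' : Matrix (Fin m) (Fin n) ℝ)
    (h : ∀ x : Fin n → ℝ, x ≠ 0 → (C *ᵥ x) ⬝ᵥ (C *ᵥ x) < (A *ᵥ x) ⬝ᵥ (A *ᵥ x))
    (h' : ∀ x : Fin n → ℝ, x ≠ 0 → (C' *ᵥ x) ⬝ᵥ (C' *ᵥ x) < (A' *ᵥ x) ⬝ᵥ (A' *ᵥ x)) :
    0 < (Aᵀ * A' - Cᵀ * C').det * (A.det * A'.det) := by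
  have unit : ∀ (B : Matrix (Fin n) (Fin n) ℝ) (E : Matrix (Fin m) (Fin n) ℝ),
      (∀ x : Fin n → ℝ, x ≠ 0 → (E *ᵥ x) ⬝ᵥ (E *ᵥ x) < (B *ᵥ x) ⬝ᵥ (B *ᵥ x)) →
      B.det ≠ 0 := by
    intro B E hB h0
    obtain ⟨x, hx, hx0⟩ := Matrix.exists_mulVec_eq_zero_iff.mpr h0
    have := hB x hx
    rw [hx0] at this
    have h2 : 0 ≤ (E *ᵥ x) ⬝ᵥ (E *ᵥ x) := by
      simp only [dotProduct]; exact Finset.sum_nonneg fun i _ => mul_self_nonneg _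
    simp at this
    linarith
  have hA := unit A C h
  have hA' := unit A' C' h'
  have contr : ∀ (B : Matrix (Fin n) (Fin n) ℝ) (E : Matrix (Fin m) (Fin n) ℝ),
      (∀ x : Fin n → ℝ, x ≠ 0 → (E *ᵥ x) ⬝ᵥ (E *ᵥ x) < (B *ᵥ x) ⬝ᵥ (B *ᵥ x)) →
      B.det ≠ 0 → ∀ x : Fin n → ℝ, x ≠ 0 →
        ((E * B⁻¹) *ᵥ x) ⬝ᵥ ((E * B⁻¹) *ᵥ x) < x ⬝ᵥ x := by
    intro B E hB h0 x hx
    have hu : IsUnit B.det := isUnit_iff_ne_zero.mpr h0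
    have e : B *ᵥ (B⁻¹ *ᵥ x) = x := by
      rw [Matrix.mulVec_mulVec, Matrix.mul_nonsing_inv _ hu, Matrix.one_mulVec]
    have := hB (B⁻¹ *ᵥ x) (by
      intro h3; rw [h3] at e; simp at e; exact hx e.symm)
    rw [e, Matrix.mulVec_mulVec] at this
    exact this
  have cA := contr A C h hA
  have cA' := contr A' C' h' hA'
  set D := C * A⁻¹ with hD
  set D' := C' * A'⁻¹ with hD'
  have e1 : Aᵀ * A' - Cᵀ * C' = Aᵀ * (1 - Dᵀ * D') * A' := by
    have hC : C = D * A := by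
      rw [hD, Matrix.mul_assoc, Matrix.nonsing_inv_mul _ (isUnit_iff_ne_zero.mpr hA), Matrix.mul_one]
    have hC' : C' = D' * A' := by
      rw [hD', Matrix.mul_assoc, Matrix.nonsing_inv_mul _ (isUnit_iff_ne_zero.mpr hA'),
        Matrix.mul_one]
    rw [Matrix.mul_sub, Matrix.sub_mul, Matrix.mul_one]
    conv_lhs => rw [hC, hC']
    rw [Matrix.transpose_mul]
    simp only [Matrix.mul_assoc]
  have hf : ∀ t : ℝ, 0 ≤ t → t ≤ 1 → (1 - t • (Dᵀ * D')).det ≠ 0 := by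
    intro t ht0 ht1 h0
    obtain ⟨x, hx, hx0⟩ := Matrix.exists_mulVec_eq_zero_iff.mpr h0
    rw [Matrix.sub_mulVec, Matrix.one_mulVec, Matrix.smul_mulVec, sub_eq_zero] at hx0
    have e2 : x ⬝ᵥ x = t * ((D *ᵥ x) ⬝ᵥ (D' *ᵥ x)) := by
      conv_lhs => rhs; rw [hx0]
      rw [dotProduct_smul, ← Matrix.mulVec_mulVec, Matrix.dotProduct_mulVec,
        Matrix.vecMul_transpose, smul_eq_mul]
    have a1 := cA x hx
    have a2 := cA' x hx
    have e3 : 2 * ((D *ᵥ x) ⬝ᵥ (D' *ᵥ x)) ≤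
        (D *ᵥ x) ⬝ᵥ (D *ᵥ x) + (D' *ᵥ x) ⬝ᵥ (D' *ᵥ x) := by
      simp only [dotProduct]
      rw [Finset.mul_sum, ← Finset.sum_add_distrib]
      refine Finset.sum_le_sum fun i _ => ?_
      nlinarith [sq_nonneg ((D *ᵥ x) i - (D' *ᵥ x) i)]
    have e4 : 0 ≤ x ⬝ᵥ x := by
      simp only [dotProduct]; exact Finset.sum_nonneg fun i _ => mul_self_nonneg _
    by_cases h5 : 0 ≤ (D *ᵥ x) ⬝ᵥ (D' *ᵥ x)
    · nlinarith
    · have : 0 ≤ (D *ᵥ x) ⬝ᵥ (D *ᵥ x) := by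
        simp only [dotProduct]; exact Finset.sum_nonneg fun i _ => mul_self_nonneg _
      nlinarith
  have f1 : 0 < (1 - Dᵀ * D').det := by
    by_contra hneg
    have hc : Continuous fun t : ℝ => (1 - t • (Dᵀ * D')).det := by fun_prop
    have := intermediate_value_Icc' (zero_le_one (α := ℝ)) hc.continuousOn
    obtain ⟨t, ht, ht0⟩ := this (show (0:ℝ) ∈ _ by
      constructor
      · simpa using hneg
      · simp)
    exact hf t ht.1 ht.2 ht0
  rw [e1, Matrix.det_mul, Matrix.det_mul, Matrix.det_transpose]
  have : A.det * (1 - Dᵀ * D').det * A'.det * (A.det * A'.det) =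
    (1 - Dᵀ * D').det * (A.det * A'.det)^2 := by ring
  rw [this]
  have := mul_ne_zero hA hA'
  positivity

def pR (x : Fin 8 → ℝ) : Fin 3 → ℝ := ![x 0 + x 1, x 2 + x 3, x 4 + x 5]
def nR (x : Fin 8 → ℝ) : Fin 5 → ℝ := ![x 0 - x 1, x 2 - x 3, x 4 - x 5, 2 * x 6, 2 * x 7]

theorem bil_expl (x y : Fin 8 → ℝ) : bilinR G8 x y =
    x 0 * y 1 + x 1 * y 0 + x 2 * y 3 + x 3 * y 2 + x 4 * y 5 + x 5 * y 4
      - 2 * (x 6 * y 6) - 2 * (x 7 * y 7) := by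
  simp [bilinR, G8, dotProduct, Matrix.mulVec, Fin.sum_univ_succ, Matrix.map]
  ring

theorem bil_pn (x y : Fin 8 → ℝ) : 2 * bilinR G8 x y = pR x ⬝ᵥ pR y - nR x ⬝ᵥ nR y := by
  rw [bil_expl]
  simp [pR, nR, dotProduct, Fin.sum_univ_succ]
  ring

def pM {k : ℕ} (w : Fin k → Fin 8 → ℝ) : Matrix (Fin 3) (Fin k) ℝ := Matrix.of fun i j => pR (w j) i
def nM {k : ℕ} (w : Fin k → Fin 8 → ℝ) : Matrix (Fin 5) (Fin k) ℝ := Matrix.of fun i j => nR (w j) i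

theorem gram_pn {k : ℕ} (w w' : Fin k → Fin 8 → ℝ) :
    (2:ℝ) • (Matrix.of fun i j => bilinR G8 (w i) (w' j)) = (pM w)ᵀ * pM w' - (nM w)ᵀ * nM w' := by
  ext i j
  simp only [Matrix.smul_apply, Matrix.of_apply, smul_eq_mul, bil_pn, Matrix.sub_apply,
    Matrix.mul_apply, Matrix.transpose_apply, pM, nM, dotProduct]

def PosT {k : ℕ} (w : Fin k → Fin 8 → ℝ) : Prop :=
  (Matrix.of fun i j => bilinR G8 (w i) (w j)).PosDef

theorem posT_lt {k : ℕ} {w : Fin k → Fin 8 → ℝ} (hw : PosT w) (x : Fin k → ℝ) (hx : x ≠ 0) :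
    (nM w *ᵥ x) ⬝ᵥ (nM w *ᵥ x) < (pM w *ᵥ x) ⬝ᵥ (pM w *ᵥ x) := by
  have h := hw.dotProduct_mulVec_pos hx
  have h2 : 2 * (star x ⬝ᵥ ((Matrix.of fun i j => bilinR G8 (w i) (w j)) *ᵥ x)) =
      (pM w *ᵥ x) ⬝ᵥ (pM w *ᵥ x) - (nM w *ᵥ x) ⬝ᵥ (nM w *ᵥ x) := by
    have : ∀ {m : ℕ} (B : Matrix (Fin m) (Fin k) ℝ), (B *ᵥ x) ⬝ᵥ (B *ᵥ x) = x ⬝ᵥ ((Bᵀ * B) *ᵥ x) := by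
      intro m B
      rw [← Matrix.mulVec_mulVec, Matrix.dotProduct_mulVec x, Matrix.vecMul_transpose]
    rw [this, this, ← dotProduct_sub, ← Matrix.sub_mulVec, ← gram_pn, Matrix.smul_mulVec,
      dotProduct_smul, smul_eq_mul]
    simp
  linarith

theorem posT_sign {w w' : Fin 3 → Fin 8 → ℝ} (hw : PosT w) (hw' : PosT w') :
    0 < (Matrix.of fun i j => bilinR G8 (w i) (w' j)).det * ((pM w).det * (pM w').det) := by
  have h := key_det _ _ _ _ (posT_lt hw) (posT_lt hw')
  rw [← gram_pn, Matrix.det_smul] at h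
  simp only [Fintype.card_fin] at h
  nlinarith

def w0 : Fin 3 → Fin 8 → ℝ := ![![1,1,0,0,0,0,0,0], ![0,0,1,1,0,0,0,0], ![0,0,0,0,1,1,0,0]]

theorem w0_gram : (Matrix.of fun i j => bilinR G8 (w0 i) (w0 j)) = (2:ℝ) • (1 : Matrix (Fin 3) (Fin 3) ℝ) := by
  ext i j
  simp only [Matrix.of_apply, bil_expl]
  fin_cases i <;> fin_cases j <;> simp [w0] <;> norm_num

theorem w0_pos : PosT w0 := by
  unfold PosT
  rw [w0_gram]
  exact Matrix.PosDef.one.smul (by norm_num)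

theorem posT_sub {k l : ℕ} {w : Fin k → Fin 8 → ℝ} (hw : PosT w) (f : Fin l → Fin k)
    (hf : Function.Injective f) : PosT (w ∘ f) := by
  have := Matrix.PosDef.submatrix hw hf
  exact this

theorem max_three {k : ℕ} {w : Fin k → Fin 8 → ℝ} (h : IsMaxPosTuple G8 w) : k = 3 := by
  obtain ⟨h1, h2⟩ := h
  by_contra hk
  rcases lt_or_gt_of_ne hk with hk | hk
  · exact h2 _ (posT_sub w0_pos (Fin.castLE (show k + 1 ≤ 3 by omega)) (Fin.castLE_injective _))
  · obtain ⟨x, hx, hx0⟩ : ∃ x : Fin k → ℝ, x ≠ 0 ∧ pM w *ᵥ x = 0 := by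
      by_contra hcon
      push Not at hcon
      have : Function.Injective (pM w).mulVecLin := by
        rw [← LinearMap.ker_eq_bot, LinearMap.ker_eq_bot']
        intro x hx
        by_contra h0
        exact hcon x h0 hx
      have := LinearMap.finrank_le_finrank_of_injective this
      simp at this
      omega
    have := posT_lt h1 x hx
    rw [hx0] at this
    have h2 : 0 ≤ (nM w *ᵥ x) ⬝ᵥ (nM w *ᵥ x) := by
      simp only [dotProduct]; exact Finset.sum_nonneg fun i _ => mul_self_nonneg _
    simp at this
    linarith

theorem max_of_pos {w : Fin 3 → Fin 8 → ℝ} (h : PosT w) : IsMaxPosTuple G8 w := by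
  refine ⟨h, fun w' hw' => ?_⟩
  obtain ⟨x, hx, hx0⟩ : ∃ x : Fin 4 → ℝ, x ≠ 0 ∧ pM w' *ᵥ x = 0 := by
    by_contra hcon
    push Not at hcon
    have : Function.Injective (pM w').mulVecLin := by
      rw [← LinearMap.ker_eq_bot, LinearMap.ker_eq_bot']
      intro x hx
      by_contra h0
      exact hcon x h0 hx
    have := LinearMap.finrank_le_finrank_of_injective this
    simp at this
  have := posT_lt (w := w') hw' x hx
  rw [hx0] at this
  have h2 : 0 ≤ (nM w' *ᵥ x) ⬝ᵥ (nM w' *ᵥ x) := by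
    simp only [dotProduct]; exact Finset.sum_nonneg fun i _ => mul_self_nonneg _
  simp at this
  linarith

def act {k : ℕ} (g : Matrix (Fin 8) (Fin 8) ℤ) (w : Fin k → Fin 8 → ℝ) : Fin k → Fin 8 → ℝ :=
  fun j => (g.map (Int.cast : ℤ → ℝ)) *ᵥ w j

theorem map_mul_int (g h : Matrix (Fin 8) (Fin 8) ℤ) :
    (g * h).map (Int.cast : ℤ → ℝ) = g.map (Int.cast : ℤ → ℝ) * h.map (Int.cast : ℤ → ℝ) := by
  exact Matrix.map_mul (f := Int.castRingHom ℝ)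

theorem act_mul {k : ℕ} (g h : Matrix (Fin 8) (Fin 8) ℤ) (w : Fin k → Fin 8 → ℝ) :
    act (g * h) w = act g (act h w) := by
  funext j
  simp only [act, map_mul_int, Matrix.mulVec_mulVec]

theorem bil_iso {g : Matrix (Fin 8) (Fin 8) ℤ} (hg : IsIsometry G8 g) (x y : Fin 8 → ℝ) :
    bilinR G8 ((g.map (Int.cast : ℤ → ℝ)) *ᵥ x) ((g.map (Int.cast : ℤ → ℝ)) *ᵥ y) = bilinR G8 x y := by
  unfold bilinR
  conv_rhs => rw [← show gᵀ * G8 * g = G8 from hg]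
  rw [map_mul_int, map_mul_int, ← Matrix.mulVec_mulVec, ← Matrix.mulVec_mulVec,
    Matrix.dotProduct_mulVec x, Matrix.transpose_map, Matrix.vecMul_transpose]

theorem posT_act {k : ℕ} {g : Matrix (Fin 8) (Fin 8) ℤ} (hg : IsIsometry G8 g)
    {w : Fin k → Fin 8 → ℝ} (hw : PosT w) : PosT (act g w) := by
  unfold PosT act
  simp only [bil_iso hg]
  exact hw

/-- working criterion -/
theorem orient_iff {g : Matrix (Fin 8) (Fin 8) ℤ} (hg : IsIsometry G8 g) :
    OrientPres G8 g ↔ ∀ w : Fin 3 → Fin 8 → ℝ, PosT w → 0 < (pM w).det * (pM (act g w)).det := by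
  have aux : ∀ a b : ℝ, 0 < a * b → (0 < a ↔ 0 < b) := by
    intro a b hab
    constructor <;> intro h
    · exact (pos_iff_pos_of_mul_pos hab).mp h
    · exact (pos_iff_pos_of_mul_pos hab).mpr h
  constructor
  · intro h w hw
    exact (aux _ _ (posT_sign hw (posT_act hg hw))).mp (h 3 w (max_of_pos hw))
  · intro h k w hw
    obtain rfl := max_three hw
    exact (aux _ _ (posT_sign hw.1 (posT_act hg hw.1))).mpr (h w hw.1)

theorem orient_of_w0 {g : Matrix (Fin 8) (Fin 8) ℤ} (hg : IsIsometry G8 g)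
    (h : 0 < (pM w0).det * (pM (act g w0)).det) : OrientPres G8 g := by
  rw [orient_iff hg]
  intro w hw
  have h1 := posT_sign hw w0_pos
  have h2 := posT_sign (posT_act hg hw) (posT_act hg w0_pos)
  have : (Matrix.of fun i j => bilinR G8 (act g w i) (act g w0 j)) =
      (Matrix.of fun i j => bilinR G8 (w i) (w0 j)) := by
    simp only [act, bil_iso hg]
  rw [this] at h2
  have h3 := mul_pos (mul_pos h1 h2) h
  have : 0 < ((Matrix.of fun i j => bilinR G8 (w i) (w0 j)).det * (pM w0).det
      * (pM (act g w0)).det)^2 * ((pM w).det * (pM (act g w)).det) := by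
    nlinarith
  exact pos_of_mul_pos_right this (sq_nonneg _)

theorem iso_mul {g h : Matrix (Fin 8) (Fin 8) ℤ} (hg : IsIsometry G8 g) (hh : IsIsometry G8 h) :
    IsIsometry G8 (g * h) := by
  unfold IsIsometry at *
  calc (g * h)ᵀ * G8 * (g * h) = hᵀ * (gᵀ * G8 * g) * h := by
        rw [Matrix.transpose_mul]; simp only [Matrix.mul_assoc]
    _ = G8 := by rw [hg, hh]

theorem iso_inv {g h : Matrix (Fin 8) (Fin 8) ℤ} (hg : IsIsometry G8 g) (e : g * h = 1) :
    IsIsometry G8 h := by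
  unfold IsIsometry at *
  calc hᵀ * G8 * h = hᵀ * (gᵀ * G8 * g) * h := by rw [hg]
    _ = (g * h)ᵀ * G8 * (g * h) := by
        rw [Matrix.transpose_mul]; simp only [Matrix.mul_assoc]
    _ = G8 := by rw [e]; simp

theorem act_one {k : ℕ} (w : Fin k → Fin 8 → ℝ) : act 1 w = w := by
  funext j
  simp [act]

def Op : Subgroup (Matrix (Fin 8) (Fin 8) ℤ)ˣ where
  carrier := {g | IsIsometry G8 (g : Matrix (Fin 8) (Fin 8) ℤ) ∧
          OrientPres G8 (g : Matrix (Fin 8) (Fin 8) ℤ)}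
  one_mem' := by
    have h1 : IsIsometry G8 (1 : Matrix (Fin 8) (Fin 8) ℤ) := by simp [IsIsometry]
    refine ⟨h1, (orient_iff h1).mpr ?_⟩
    intro w hw
    rw [act_one]
    have := posT_sign hw hw
    have h2 := pos_of_mul_pos_right this (Matrix.PosDef.det_pos hw).le
    exact h2
  mul_mem' := by
    rintro g h ⟨g1, g2⟩ ⟨h1, h2⟩
    have := iso_mul g1 h1
    refine ⟨this, (orient_iff this).mpr ?_⟩
    rw [orient_iff g1] at g2
    rw [orient_iff h1] at h2
    intro w hw
    rw [act_mul]
    have a := h2 w hw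
    have b := g2 _ (posT_act h1 hw)
    have c := mul_pos a b
    have : 0 < ((pM (act (h : Matrix (Fin 8) (Fin 8) ℤ) w)).det)^2 * ((pM w).det *
      (pM (act (g : Matrix (Fin 8) (Fin 8) ℤ) (act (h : Matrix (Fin 8) (Fin 8) ℤ) w))).det) := by
      nlinarith
    exact pos_of_mul_pos_right this (sq_nonneg _)
  inv_mem' := by
    rintro g ⟨g1, g2⟩
    have e : (g : Matrix (Fin 8) (Fin 8) ℤ) * (g⁻¹ : (Matrix (Fin 8) (Fin 8) ℤ)ˣ) = 1 := by simp
    have := iso_inv g1 e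
    refine ⟨this, (orient_iff this).mpr ?_⟩
    rw [orient_iff g1] at g2
    intro w hw
    have := g2 _ (posT_act this hw)
    rw [← act_mul, e, act_one] at this
    linarith

theorem exists_red (a x : ℤ) (hx : x ≠ 0) : ∃ k : ℤ, |a + 2 * k * x| ≤ |x| := by
  have h1 := Int.emod_nonneg a (b := 2 * x) (by omega)
  have h2 := Int.emod_lt_abs a (b := 2 * x) (by omega)
  have h3 := Int.emod_add_mul_ediv a (2 * x)
  rw [abs_mul] at h2
  simp at h2
  by_cases h : a % (2 * x) ≤ |x|
  · refine ⟨-(a / (2 * x)), ?_⟩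
    have : a + 2 * (-(a / (2 * x))) * x = a % (2 * x) := by linarith
    rw [this, abs_of_nonneg h1]
    exact h
  · rcases abs_cases x with ⟨hx', _⟩ | ⟨hx', _⟩
    · refine ⟨-(a / (2 * x)) - 1, ?_⟩
      have : a + 2 * (-(a / (2 * x)) - 1) * x = a % (2 * x) - 2 * x := by linarith
      rw [this, abs_le]
      constructor <;> linarith
    · refine ⟨-(a / (2 * x)) + 1, ?_⟩
      have : a + 2 * (-(a / (2 * x)) + 1) * x = a % (2 * x) + 2 * x := by linarith
      rw [this, abs_le]
      constructor <;> linarith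

theorem descent (P : ℤ → ℤ → ℤ → ℤ → ℤ → ℤ → ℤ → ℤ → Prop)
    (hC : ∀ k x1 y1 x2 y2 x3 y3 a b, P x1 (y1 + k * y2) (x2 - k * x1) y2 x3 y3 a b →
      P x1 y1 x2 y2 x3 y3 a b)
    (hs1 : ∀ x1 y1 x2 y2 x3 y3 a b, P y1 x1 x2 y2 x3 y3 a b → P x1 y1 x2 y2 x3 y3 a b)
    (hE : ∀ x1 y1 x2 y2 x3 y3 a b, P x2 y2 (-x1) (-y1) x3 y3 a b → P x1 y1 x2 y2 x3 y3 a b)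
    (hc : ∀ x1 y1 x2 y2 x3 y3 a b, P x2 y2 x3 y3 x1 y1 a b → P x1 y1 x2 y2 x3 y3 a b)
    (hZ : ∀ k x1 y1 x2 y2 x3 y3 a b, P (x1 + k * a + k ^ 2 * y1) y1 x2 y2 x3 y3 (a + 2 * k * y1) b →
      P x1 y1 x2 y2 x3 y3 a b)
    (hn : ∀ x1 y1 x2 y2 x3 y3 a b, P x1 y1 x2 y2 x3 y3 (-a) b → P x1 y1 x2 y2 x3 y3 a b)
    (hR : ∀ x1 y1 x2 y2 x3 y3 a b, P x1 y1 x2 y2 x3 y3 (-b) (-a) → P x1 y1 x2 y2 x3 y3 a b)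
    (h0 : P 0 0 0 0 0 0 0 1) :
    ∀ x1 y1 x2 y2 x3 y3 a b, 4 * (x1 * y1 + x2 * y2 + x3 * y3) = a ^ 2 + b ^ 2 - 1 →
      P x1 y1 x2 y2 x3 y3 a b := by
  have hs2 : ∀ x1 y1 x2 y2 x3 y3 a b, P x1 y1 y2 x2 x3 y3 a b → P x1 y1 x2 y2 x3 y3 a b := by
    intro x1 y1 x2 y2 x3 y3 a b h
    apply hc; apply hs1; apply hc; apply hc; exact h
  have hs3 : ∀ x1 y1 x2 y2 x3 y3 a b, P x1 y1 x2 y2 y3 x3 a b → P x1 y1 x2 y2 x3 y3 a b := by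
    intro x1 y1 x2 y2 x3 y3 a b h
    apply hc; apply hc; apply hs1; apply hc; exact h
  -- exchange the last two planes
  have hx : ∀ x1 y1 x2 y2 x3 y3 a b, P x1 y1 x3 y3 (-x2) (-y2) a b → P x1 y1 x2 y2 x3 y3 a b := by
    intro x1 y1 x2 y2 x3 y3 a b h
    apply hc; apply hE; apply hc; apply hc; exact h
  have hx' : ∀ x1 y1 x2 y2 x3 y3 a b, P x1 y1 (-x3) (-y3) x2 y2 a b → P x1 y1 x2 y2 x3 y3 a b := by
    intro x1 y1 x2 y2 x3 y3 a b h
    apply hx; apply hx; apply hx; simpa using h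
  have hRn : ∀ x1 y1 x2 y2 x3 y3 a b, P x1 y1 x2 y2 x3 y3 b a → P x1 y1 x2 y2 x3 y3 a b := by
    intro x1 y1 x2 y2 x3 y3 a b h
    apply hn; apply hR; apply hn; simpa using h
  have hu : ∀ a b : ℤ, a ^ 2 + b ^ 2 = 1 → P 0 0 0 0 0 0 a b := by
    intro a b hab
    have ha : -1 ≤ a ∧ a ≤ 1 := by constructor <;> nlinarith [sq_nonneg b]
    have hb : -1 ≤ b ∧ b ≤ 1 := by constructor <;> nlinarith [sq_nonneg a]
    obtain ⟨ha1, ha2⟩ := ha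
    obtain ⟨hb1, hb2⟩ := hb
    interval_cases a <;> interval_cases b <;> simp at hab
    · apply hn; apply hRn; simpa using h0
    · apply hRn; apply hn; apply hRn; simpa using h0
    · exact h0
    · apply hRn; exact h0
  have main : ∀ n : ℕ, ∀ x1 y1 x2 y2 x3 y3 a b : ℤ, x1 ≠ 0 → x1.natAbs ≤ n →
      4 * (x1 * y1 + x2 * y2 + x3 * y3) = a ^ 2 + b ^ 2 - 1 →
      P x1 y1 x2 y2 x3 y3 a b := by
    intro n
    induction n with
    | zero => intro x1 y1 x2 y2 x3 y3 a b h h'; omega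
    | succ n ih =>
    -- clear x2 or descend
    have step : ∀ x1 y1 x2 y2 x3 y3 a b : ℤ, x1 ≠ 0 → x1.natAbs ≤ n + 1 →
      4 * (x1 * y1 + x2 * y2 + x3 * y3) = a ^ 2 + b ^ 2 - 1 →
      (∀ k, x2 = k * x1 → P x1 (y1 + k * y2) 0 y2 x3 y3 a b) →
      P x1 y1 x2 y2 x3 y3 a b := by
      intro x1 y1 x2 y2 x3 y3 a b h1 h2 h3 h4
      have e := Int.emod_add_mul_ediv x2 x1
      have p := Int.emod_nonneg x2 h1
      have q := Int.emod_lt_abs x2 h1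
      by_cases hr : x2 % x1 = 0
      · apply hC (x2 / x1)
        have e2 : x2 = (x2 / x1) * x1 := by linarith
        rw [show x2 - x2 / x1 * x1 = 0 by linarith]
        exact h4 _ e2
      · apply hC (x2 / x1)
        rw [show x2 - x2 / x1 * x1 = x2 % x1 by linarith]
        apply hE
        apply ih _ _ _ _ _ _ _ _ hr
        · rw [Int.abs_eq_natAbs] at q; omega
        · rw [← h3]
          linear_combination (4 * y2) * e
    -- all of x2 y2 zero
    have step2 : ∀ x1 y1 x2 y2 x3 y3 a b : ℤ, x1 ≠ 0 → x1.natAbs ≤ n + 1 →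
      4 * (x1 * y1 + x2 * y2 + x3 * y3) = a ^ 2 + b ^ 2 - 1 →
      (∀ y1', 4 * (x1 * y1' + x3 * y3) = a ^ 2 + b ^ 2 - 1 → P x1 y1' 0 0 x3 y3 a b) →
      P x1 y1 x2 y2 x3 y3 a b := by
      intro x1 y1 x2 y2 x3 y3 a b h1 h2 h3 h4
      apply step _ _ _ _ _ _ _ _ h1 h2 h3
      intro k hk
      apply hs2
      apply step _ _ _ _ _ _ _ _ h1 h2 (by rw [← h3, hk]; ring)
      intro l hl
      apply h4
      rw [← h3, hk]; ring
    intro x1 y1 x2 y2 x3 y3 a b h1 h2 h3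
    apply step2 _ _ _ _ _ _ _ _ h1 h2 h3
    intro z1 hz1
    apply hx
    apply step2 _ _ _ _ _ _ _ _ h1 h2 (by rw [← hz1]; ring)
    intro z2 hz2
    simp only [neg_zero] at hz2 ⊢
    -- now P x1 z2 0 0 0 0 a b
    obtain ⟨k, hk⟩ := exists_red a x1 h1
    apply hs1
    apply hZ k
    apply hRn
    obtain ⟨l, hl⟩ := exists_red b x1 h1
    apply hZ l
    generalize hA : a + 2 * k * x1 = A at *
    generalize hB : b + 2 * l * x1 = B at *
    generalize hY : z2 + k * a + k ^ 2 * x1 + l * b + l ^ 2 * x1 = Y at *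
    have hN : 4 * (x1 * Y) = A ^ 2 + B ^ 2 - 1 := by
      rw [← hA, ← hB, ← hY]; linear_combination hz2
    by_cases hY0 : Y = 0
    · apply hs1
      have hAB : A ^ 2 + B ^ 2 = 1 := by rw [hY0] at hN; linarith
      subst hY0
      have fin : ∀ A B : ℤ, A ^ 2 + B ^ 2 = 1 → A ≠ 0 → P x1 0 0 0 0 0 A B := by
        intro A B h hA0
        apply hZ (-x1 * A)
        have hA1 : A ^ 2 = 1 := by nlinarith [sq_nonneg B, sq_nonneg A, Int.one_le_abs hA0, sq_abs A, abs_nonneg A]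
        rw [show x1 + -x1 * A * A + (-x1 * A) ^ 2 * 0 = 0 by linear_combination (-x1) * hA1]
        rw [mul_zero, add_zero]
        exact hu _ _ h
      by_cases hA0 : A = 0
      · apply fin _ _ (by linarith)
        rintro rfl
        subst hA0
        simp at hAB
      · apply hRn; exact fin _ _ hAB hA0
    · apply ih _ _ _ _ _ _ _ _ hY0
      · have a1 : A ^ 2 ≤ x1 ^ 2 := sq_le_sq.mpr hk
        have b1 : B ^ 2 ≤ x1 ^ 2 := sq_le_sq.mpr hl
        have hlt : |Y| < |x1| := by
          have hx1 : 0 < |x1| := abs_pos.mpr h1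
          have : 4 * (|x1| * |Y|) ≤ 2 * |x1| ^ 2 := by
            rw [← abs_mul, sq_abs]
            rcases abs_cases (x1 * Y) with ⟨h, _⟩ | ⟨h, _⟩ <;> rw [h] <;> nlinarith [sq_nonneg A, sq_nonneg B]
          nlinarith
        rw [Int.abs_eq_natAbs, Int.abs_eq_natAbs] at hlt
        omega
      · linarith
  intro x1 y1 x2 y2 x3 y3 a b h
  have m1 : ∀ x1 y1 x2 y2 x3 y3 a b : ℤ, (x1 ≠ 0 ∨ y1 ≠ 0) →
      4 * (x1 * y1 + x2 * y2 + x3 * y3) = a ^ 2 + b ^ 2 - 1 →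
      P x1 y1 x2 y2 x3 y3 a b := by
    intro x1 y1 x2 y2 x3 y3 a b h1 h
    rcases h1 with h1 | h1
    · exact main _ _ _ _ _ _ _ _ _ h1 le_rfl h
    · apply hs1
      exact main _ _ _ _ _ _ _ _ _ h1 le_rfl (by rw [← h]; ring)
  by_cases c1 : x1 ≠ 0 ∨ y1 ≠ 0
  · exact m1 _ _ _ _ _ _ _ _ c1 h
  by_cases c2 : x2 ≠ 0 ∨ y2 ≠ 0
  · apply hc
    exact m1 _ _ _ _ _ _ _ _ c2 (by rw [← h]; ring)
  by_cases c3 : x3 ≠ 0 ∨ y3 ≠ 0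
  · apply hc; apply hc
    exact m1 _ _ _ _ _ _ _ _ c3 (by rw [← h]; ring)
  push Not at c1 c2 c3
  obtain ⟨rfl, rfl⟩ := c1
  obtain ⟨rfl, rfl⟩ := c2
  obtain ⟨rfl, rfl⟩ := c3
  apply hu
  linarith

abbrev Mat8 := Matrix (Fin 8) (Fin 8) ℤ

theorem iso_isUnit {g : Mat8} (hg : IsIsometry G8 g) : IsUnit g := by
  rw [Matrix.isUnit_iff_isUnit_det]
  have hG : G8.det ≠ 0 := by
    have e : (!![0,2,0,0,0,0,0,0; 2,0,0,0,0,0,0,0; 0,0,0,2,0,0,0,0; 0,0,2,0,0,0,0,0;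
        0,0,0,0,0,2,0,0; 0,0,0,0,2,0,0,0; 0,0,0,0,0,0,-1,0; 0,0,0,0,0,0,0,-1] : Mat8) * G8
        = (2:ℤ) • (1 : Mat8) := by decide
    have := congrArg Matrix.det e
    rw [Matrix.det_mul, Matrix.det_smul, Matrix.det_one] at this
    intro h0
    rw [h0] at this
    simp at this
  have := congrArg Matrix.det (show gᵀ * G8 * (g : Mat8) = G8 from hg)
  rw [Matrix.det_mul, Matrix.det_mul, Matrix.det_transpose] at this
  have h1 : g.det * g.det = 1 := by
    apply mul_left_cancel₀ hG
    linarith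
  exact IsUnit.of_mul_eq_one _ h1

/-- integer version of the projection of the standard positive frame -/
def pZ (g : Mat8) : Matrix (Fin 3) (Fin 3) ℤ :=
  !![g 0 0 + g 0 1 + (g 1 0 + g 1 1), g 0 2 + g 0 3 + (g 1 2 + g 1 3), g 0 4 + g 0 5 + (g 1 4 + g 1 5);
     g 2 0 + g 2 1 + (g 3 0 + g 3 1), g 2 2 + g 2 3 + (g 3 2 + g 3 3), g 2 4 + g 2 5 + (g 3 4 + g 3 5);
     g 4 0 + g 4 1 + (g 5 0 + g 5 1), g 4 2 + g 4 3 + (g 5 2 + g 5 3), g 4 4 + g 4 5 + (g 5 4 + g 5 5)]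

theorem pM_w0 (g : Mat8) : pM (act g w0) = (pZ g).map (Int.cast : ℤ → ℝ) := by
  ext i j
  fin_cases i <;> fin_cases j <;>
    simp [pM, pR, act, w0, pZ, Matrix.mulVec, dotProduct, Fin.sum_univ_succ]

theorem pM_w0_pos : 0 < (pM w0).det := by
  have := pM_w0 1
  rw [act_one] at this
  rw [this]
  have e : (pZ 1) = (2:ℤ) • (1 : Matrix (Fin 3) (Fin 3) ℤ) := by decide
  rw [e]
  have h := Int.cast_det (R := ℝ) ((2:ℤ) • (1 : Matrix (Fin 3) (Fin 3) ℤ))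
  rw [← h, Matrix.det_smul]
  simp

theorem orient_of_pZ {g : Mat8} (hg : IsIsometry G8 g) (h : 0 < (pZ g).det) : OrientPres G8 g := by
  apply orient_of_w0 hg
  rw [pM_w0]
  have e := Int.cast_det (R := ℝ) (pZ g)
  rw [← e]
  exact mul_pos pM_w0_pos (by exact_mod_cast h)

abbrev genSet : Set Mat8ˣ :=
  {g : Mat8ˣ | (g : Mat8) = RM} ∪ {g : Mat8ˣ |
            (IsIsometry G8 (g : Mat8) ∧ OrientPres G8 (g : Mat8)) ∧ (g : Mat8) *ᵥ epsv = epsv}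

theorem RM_iso : IsIsometry G8 RM := by unfold IsIsometry; decide

theorem RM_or : OrientPres G8 RM := by
  apply orient_of_pZ RM_iso
  rw [Matrix.det_fin_three]
  decide

def Reach (v : Fin 8 → ℤ) : Prop := ∃ h ∈ Subgroup.closure genSet, (h : Mat8) *ᵥ v = epsv

theorem reach_of_stab (g : Mat8) (hg : IsIsometry G8 g) (h : 0 < (pZ g).det) (he : g *ᵥ epsv = epsv)
    {v v' : Fin 8 → ℤ} (hv : g *ᵥ v = v') (hr : Reach v') : Reach v := by
  obtain ⟨u, rfl⟩ := iso_isUnit hg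
  obtain ⟨k, hk, hk'⟩ := hr
  refine ⟨k * u, mul_mem hk (Subgroup.subset_closure (Or.inr ⟨⟨hg, orient_of_pZ hg h⟩, he⟩)), ?_⟩
  rw [Units.val_mul, ← Matrix.mulVec_mulVec, hv, hk']

theorem reach_of_R {v v' : Fin 8 → ℤ} (hv : RM *ᵥ v = v') (hr : Reach v') : Reach v := by
  obtain ⟨u, hu⟩ := iso_isUnit RM_iso
  obtain ⟨k, hk, hk'⟩ := hr
  refine ⟨k * u, mul_mem hk (Subgroup.subset_closure (Or.inl hu)), ?_⟩
  rw [Units.val_mul, ← Matrix.mulVec_mulVec, hu, hv, hk']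

/-- generators -/
def gC (k : ℤ) : Mat8 :=
  !![1,0,0,0,0,0,0,0;
     0,1,0,k,0,0,0,0;
     -k,0,1,0,0,0,0,0;
     0,0,0,1,0,0,0,0;
     0,0,0,0,1,0,0,0;
     0,0,0,0,0,1,0,0;
     0,0,0,0,0,0,1,0;
     0,0,0,0,0,0,0,1]

def gs : Mat8 :=
  !![0,1,0,0,0,0,0,0;
     1,0,0,0,0,0,0,0;
     0,0,1,0,0,0,0,0;
     0,0,0,1,0,0,0,0;
     0,0,0,0,1,0,0,0;
     0,0,0,0,0,1,0,0;
     0,0,0,0,0,0,1,0;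
     0,0,0,0,0,0,0,1]

def gE : Mat8 :=
  !![0,0,1,0,0,0,0,0;
     0,0,0,1,0,0,0,0;
     -1,0,0,0,0,0,0,0;
     0,-1,0,0,0,0,0,0;
     0,0,0,0,1,0,0,0;
     0,0,0,0,0,1,0,0;
     0,0,0,0,0,0,1,0;
     0,0,0,0,0,0,0,1]

def gc : Mat8 :=
  !![0,0,1,0,0,0,0,0;
     0,0,0,1,0,0,0,0;
     0,0,0,0,1,0,0,0;
     0,0,0,0,0,1,0,0;
     1,0,0,0,0,0,0,0;
     0,1,0,0,0,0,0,0;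
     0,0,0,0,0,0,1,0;
     0,0,0,0,0,0,0,1]

def gn : Mat8 :=
  !![1,0,0,0,0,0,0,0;
     0,1,0,0,0,0,0,0;
     0,0,1,0,0,0,0,0;
     0,0,0,1,0,0,0,0;
     0,0,0,0,1,0,0,0;
     0,0,0,0,0,1,0,0;
     0,0,0,0,0,0,-1,0;
     0,0,0,0,0,0,0,1]

def gZ (k : ℤ) : Mat8 :=
  !![1,k^2,0,0,0,0,2*k,0;
     0,1,0,0,0,0,0,0;
     0,0,1,0,0,0,0,0;
     0,0,0,1,0,0,0,0;
     0,0,0,0,1,0,0,0;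
     0,0,0,0,0,1,0,0;
     0,k,0,0,0,0,1,0;
     0,0,0,0,0,0,0,1]

theorem gC_iso (k : ℤ) : IsIsometry G8 (gC k) := by
  unfold IsIsometry
  ext i j
  fin_cases i <;> fin_cases j <;>
    simp [gC, G8, Matrix.mul_apply, Fin.sum_univ_succ]

theorem gZ_iso (k : ℤ) : IsIsometry G8 (gZ k) := by
  unfold IsIsometry
  ext i j
  fin_cases i <;> fin_cases j <;>
    simp [gZ, G8, Matrix.mul_apply, Fin.sum_univ_succ] <;> ring

theorem gC_pos (k : ℤ) : 0 < (pZ (gC k)).det := by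
  rw [Matrix.det_fin_three]
  simp [pZ, gC]
  nlinarith [sq_nonneg k]

theorem gZ_pos (k : ℤ) : 0 < (pZ (gZ k)).det := by
  rw [Matrix.det_fin_three]
  simp [pZ, gZ]
  nlinarith [sq_nonneg k]

theorem reach_all (x1 y1 x2 y2 x3 y3 a b : ℤ)
    (h : 4 * (x1 * y1 + x2 * y2 + x3 * y3) = a ^ 2 + b ^ 2 - 1) :
    Reach ![2*x1, 2*y1, 2*x2, 2*y2, 2*x3, 2*y3, a, b] := by
  refine descent (fun x1 y1 x2 y2 x3 y3 a b => Reach ![2*x1, 2*y1, 2*x2, 2*y2, 2*x3, 2*y3, a, b])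
    ?_ ?_ ?_ ?_ ?_ ?_ ?_ ?_ x1 y1 x2 y2 x3 y3 a b h
  · intro k x1 y1 x2 y2 x3 y3 a b
    apply reach_of_stab (gC k) (gC_iso k) (gC_pos k)
    · ext i; fin_cases i <;> simp [gC, epsv, Matrix.mulVec, dotProduct, Fin.sum_univ_succ]
    · ext i; fin_cases i <;> simp [gC, Matrix.mulVec, dotProduct, Fin.sum_univ_succ] <;> ring
  · intro x1 y1 x2 y2 x3 y3 a b
    apply reach_of_stab gs (by unfold IsIsometry; decide) (by rw [Matrix.det_fin_three]; decide) (by decide)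
    ext i; fin_cases i <;> simp [gs, Matrix.mulVec, dotProduct, Fin.sum_univ_succ]
  · intro x1 y1 x2 y2 x3 y3 a b
    apply reach_of_stab gE (by unfold IsIsometry; decide) (by rw [Matrix.det_fin_three]; decide) (by decide)
    ext i; fin_cases i <;> simp [gE, Matrix.mulVec, dotProduct, Fin.sum_univ_succ]
  · intro x1 y1 x2 y2 x3 y3 a b
    apply reach_of_stab gc (by unfold IsIsometry; decide) (by rw [Matrix.det_fin_three]; decide) (by decide)
    ext i; fin_cases i <;> simp [gc, Matrix.mulVec, dotProduct, Fin.sum_univ_succ]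
  · intro k x1 y1 x2 y2 x3 y3 a b
    apply reach_of_stab (gZ k) (gZ_iso k) (gZ_pos k)
    · ext i; fin_cases i <;> simp [gZ, epsv, Matrix.mulVec, dotProduct, Fin.sum_univ_succ]
    · ext i; fin_cases i <;> simp [gZ, Matrix.mulVec, dotProduct, Fin.sum_univ_succ] <;> ring
  · intro x1 y1 x2 y2 x3 y3 a b
    apply reach_of_stab gn (by unfold IsIsometry; decide) (by rw [Matrix.det_fin_three]; decide) (by decide)
    ext i; fin_cases i <;> simp [gn, Matrix.mulVec, dotProduct, Fin.sum_univ_succ]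
  · intro x1 y1 x2 y2 x3 y3 a b
    apply reach_of_R
    ext i; fin_cases i <;> simp [RM, Matrix.mulVec, dotProduct, Fin.sum_univ_succ]
  · refine ⟨1, one_mem _, ?_⟩
    decide

theorem reach_iso (g : Mat8ˣ) (hg : IsIsometry G8 (g : Mat8)) : Reach ((g : Mat8) *ᵥ epsv) := by
  have hGe : G8 *ᵥ epsv = (-2 : ℤ) • epsv := by decide
  -- evenness
  have e1 : ∀ i, (2:ℤ) ∣ (G8 *ᵥ ((g : Mat8) *ᵥ epsv)) i := by
    have hi : ((g⁻¹ : Mat8ˣ) : Mat8)ᵀ * (g : Mat8)ᵀ = 1 := by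
      rw [← Matrix.transpose_mul]; simp
    have : G8 *ᵥ ((g : Mat8) *ᵥ epsv) = (-2 : ℤ) • (((g⁻¹ : Mat8ˣ) : Mat8)ᵀ *ᵥ epsv) := by
      rw [← Matrix.mulVec_smul, ← hGe]
      conv_rhs => rw [← show (g : Mat8)ᵀ * G8 * (g : Mat8) = G8 from hg]
      rw [Matrix.mulVec_mulVec, Matrix.mulVec_mulVec, ← Matrix.mul_assoc, ← Matrix.mul_assoc, hi,
        Matrix.one_mul]
    intro i
    rw [this]
    exact ⟨-(((g⁻¹ : Mat8ˣ) : Mat8)ᵀ *ᵥ epsv) i, by simp⟩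
  have e2 : ((g : Mat8) *ᵥ epsv) ⬝ᵥ (G8 *ᵥ ((g : Mat8) *ᵥ epsv)) = -2 := by
    have : epsv ⬝ᵥ (((g : Mat8)ᵀ * G8 * (g : Mat8)) *ᵥ epsv) = -2 := by
      rw [show (g : Mat8)ᵀ * G8 * (g : Mat8) = G8 from hg]; decide
    rw [← this, ← Matrix.mulVec_mulVec, ← Matrix.mulVec_mulVec, Matrix.dotProduct_mulVec epsv,
      Matrix.vecMul_transpose]
  generalize (g : Mat8) *ᵥ epsv = v at *
  have hv : G8 *ᵥ v = ![v 1, v 0, v 3, v 2, v 5, v 4, -2 * v 6, -2 * v 7] := by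
    ext i; fin_cases i <;> simp [G8, Matrix.mulVec, dotProduct, Fin.sum_univ_succ]
  rw [hv] at e1 e2
  obtain ⟨y1, hy1⟩ : (2:ℤ) ∣ v 1 := e1 0
  obtain ⟨x1, hx1⟩ : (2:ℤ) ∣ v 0 := e1 1
  obtain ⟨y2, hy2⟩ : (2:ℤ) ∣ v 3 := e1 2
  obtain ⟨x2, hx2⟩ : (2:ℤ) ∣ v 2 := e1 3
  obtain ⟨y3, hy3⟩ : (2:ℤ) ∣ v 5 := e1 4
  obtain ⟨x3, hx3⟩ : (2:ℤ) ∣ v 4 := e1 5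
  have hv' : v = ![2*x1, 2*y1, 2*x2, 2*y2, 2*x3, 2*y3, v 6, v 7] := by
    ext i; fin_cases i <;> simp [*]
  rw [hv']
  apply reach_all
  have e3 : v 0 * v 1 + v 1 * v 0 + v 2 * v 3 + v 3 * v 2 + v 4 * v 5 + v 5 * v 4
      - 2 * (v 6 * v 6) - 2 * (v 7 * v 7) = -2 := by
    rw [← e2]; simp [dotProduct, Fin.sum_univ_succ]; ring
  rw [hx1, hx2, hx3, hy1, hy2, hy3] at e3
  linarith

/-- On `M = U³ ⊕ ℤζ ⊕ ℤε`, the pairing `(x, ζ+ε)` is always even, the matrix `RM` realizes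
the reflection `x ↦ x + ½ (x, ζ+ε)(ζ+ε)`, which is an isometry belonging to `O⁺(M)`, and
`O⁺(M)` is generated by `R` together with the subgroup of elements of `O⁺(M)` fixing `ε`
(i.e. the extensions by the identity on `ℤε` of the elements of `O⁺(U³ ⊕ ℤζ)`).
The ambient group `(Matrix (Fin 8) (Fin 8) ℤ)ˣ` is `GL(M)`. -/
theorem stmt_14 :
    (∀ x : Fin 8 → ℤ, 2 ∣ x ⬝ᵥ (G8 *ᵥ zpe)) ∧
    (∀ x : Fin 8 → ℤ, 2 • (RM *ᵥ x) = 2 • x + (x ⬝ᵥ (G8 *ᵥ zpe)) • zpe) ∧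
    (IsIsometry G8 RM ∧ OrientPres G8 RM) ∧
    ((Subgroup.closure
        ({g : (Matrix (Fin 8) (Fin 8) ℤ)ˣ | (g : Matrix (Fin 8) (Fin 8) ℤ) = RM} ∪
         {g : (Matrix (Fin 8) (Fin 8) ℤ)ˣ |
            (IsIsometry G8 (g : Matrix (Fin 8) (Fin 8) ℤ) ∧
              OrientPres G8 (g : Matrix (Fin 8) (Fin 8) ℤ)) ∧
            (g : Matrix (Fin 8) (Fin 8) ℤ) *ᵥ epsv = epsv}) :
        Set ((Matrix (Fin 8) (Fin 8) ℤ)ˣ)) =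
      {g : (Matrix (Fin 8) (Fin 8) ℤ)ˣ |
        IsIsometry G8 (g : Matrix (Fin 8) (Fin 8) ℤ) ∧
          OrientPres G8 (g : Matrix (Fin 8) (Fin 8) ℤ)}) := by
  refine ⟨?_, ?_, ⟨RM_iso, RM_or⟩, ?_⟩
  · intro x
    refine ⟨-(x 6 + x 7), ?_⟩
    simp [G8, zpe, Matrix.mulVec, dotProduct, Fin.sum_univ_succ]
    ring
  · intro x
    ext i
    fin_cases i <;> simp [RM, G8, zpe, Matrix.mulVec, dotProduct, Fin.sum_univ_succ] <;> ring
  · apply Set.Subset.antisymm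
    · have : Subgroup.closure genSet ≤ Op := by
        rw [Subgroup.closure_le]
        rintro g (hg | hg)
        · have hg' : (g : Mat8) = RM := hg
          show IsIsometry G8 (g : Mat8) ∧ OrientPres G8 (g : Mat8)
          rw [hg']
          exact ⟨RM_iso, RM_or⟩
        · exact hg.1
      exact this
    · intro g hg
      obtain ⟨h, hh, he⟩ := reach_iso g hg.1
      have hOp : h ∈ Op := by
        have : Subgroup.closure genSet ≤ Op := by
          rw [Subgroup.closure_le]
          rintro g (hg | hg)
          · have hg' : (g : Mat8) = RM := hg
            show IsIsometry G8 (g : Mat8) ∧ OrientPres G8 (g : Mat8)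
            rw [hg']
            exact ⟨RM_iso, RM_or⟩
          · exact hg.1
        exact this hh
      have hgOp : g ∈ Op := hg
      have hs : h * g ∈ Subgroup.closure genSet := by
        apply Subgroup.subset_closure
        right
        refine ⟨mul_mem hOp hgOp, ?_⟩
        rw [Units.val_mul, ← Matrix.mulVec_mulVec]
        exact he
      have : g ∈ Subgroup.closure genSet := (Subgroup.mul_mem_cancel_left _ hh).mp hs
      exact this
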